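/- Let j', j'', j be integers and ell', ell'', ellcap, ell odd integers in [t]. Consider the family F of ordered pairs (A,B) of subsets of [t] with |A| = j' < t, |B| = j'' < t, |A intersect B| = j > 0, max{j',j''} < |A union B| < t, q(A - B) = ell', q(B - A) = ell'', q(A intersect B) = ellcap and q(A union B) = ell. Then: (vi) the number of pairs (A,B) in F with {1,t} intersect A = {1,t} and {1,t} intersect B empty is Fr(alpha,alpha;(ell-1)/2,(ell'+1)/2,(ell''-1)/2,(ellcap-1)/2) * c((ell-1)/2; t-(j'+j''-j)) * c((ell'+1)/2; j'-j) * c((ell''-1)/2; j''-j) * c((ellcap-1)/2; j); (vii) the number with {1,t} intersect A = {1,t} and {1,t} intersect B = {t} is Fr(alpha,gamma;(ell-1)/2,(ell'+1)/2,(ell''-1)/2,(ellcap+1)/2) * c((ell-1)/2; t-(j'+j''-j)) * c((ell'+1)/2; j'-j) * c((ell''-1)/2; j''-j) * c((ellcap+1)/2; j); (viii) the number with {1,t} intersect A and {1,t} intersect B both empty is Fr(theta,theta;(ell+1)/2,(ell'-1)/2,(ell''-1)/2,(ellcap-1)/2) * c((ell+1)/2; t-(j'+j''-j)) * c((ell'-1)/2;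 j'-j) * c((ell''-1)/2; j''-j) * c((ellcap-1)/2; j); (ix) the number with {1,t} intersect A empty and {1,t} intersect B = {t} is Fr(theta,beta;(ell+1)/2,(ell'-1)/2,(ell''+1)/2,(ellcap-1)/2) * c((ell+1)/2; t-(j'+j''-j)) * c((ell'-1)/2; j'-j) * c((ell''+1)/2; j''-j) * c((ellcap-1)/2; j); (x) the number with {1,t} intersect A = {1,t} intersect B = {t} is Fr(theta,gamma;(ell+1)/2,(ell'-1)/2,(ell''-1)/2,(ellcap+1)/2) * c((ell+1)/2; t-(j'+j''-j)) * c((ell'-1)/2; j'-j) * c((ell''-1)/2; j''-j) * c((ellcap+1)/2; j). -/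

import Mathlib

open Finset

noncomputable section

/-- Row vectors of `ℝ^t`. -/
abbrev Vec (t : ℕ) := Fin t → ℝ

/-- `T` is a vertex of the discrete hypercube `{1,-1}^t`. -/
def IsPMVertex {t : ℕ} (T : Vec t) : Prop := ∀ i, T i = 1 ∨ T i = -1

/-- `T` is a vertex of the discrete hypercube `{0,1}^t`. -/
def Is01Vertex {t : ℕ} (T : Vec t) : Prop := ∀ i, T i = 0 ∨ T i = 1

open Classical in
/-- Hamming distance between two vectors. -/
def hamming {t : ℕ} (X Y : Vec t) : ℕ :=
  (Finset.univ.filter fun i => X i ≠ Y i).card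

/-- The standard scalar product on `ℝ^t`. -/
def sprod {t : ℕ} (X Y : Vec t) : ℝ := ∑ i, X i * Y i

open Classical in
/-- The cardinality of the negative part `T⁻ = {e : T e = -1}` of `T`. -/
def negCard {t : ℕ} (T : Vec t) : ℕ :=
  (Finset.univ.filter fun i => T i = -1).card

open Classical in
/-- The Hamming weight (number of coordinates equal to `1`) of a `0/1`-vector. -/
def hwt01 {t : ℕ} (T : Vec t) : ℕ :=
  (Finset.univ.filter fun i => T i = 1).card

/-- `D` (read as a `2t`-periodic sequence `D^0, D^1, …`) is a symmetric cycle in the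
hypercube graph `H(t,2)` on the vertex set `{1,-1}^t`: all `D^k` are vertices,
consecutive members are adjacent (Hamming distance `1`), the `2t` members
`D^0, …, D^{2t-1}` are pairwise distinct, and `D^{k+t} = -D^k` for `0 ≤ k ≤ t-1`. -/
structure IsSymCycle (t : ℕ) (D : ℕ → Vec t) : Prop where
  vertex : ∀ k, IsPMVertex (D k)
  periodic : ∀ k, D (k + 2 * t) = D k
  adj : ∀ k, hamming (D k) (D (k + 1)) = 1
  inj : ∀ k l, k < 2 * t → l < 2 * t → D k = D l → k = l
  symm : ∀ k, k ≤ t - 1 → D (k + t) = -(D k)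

/-- `D` is a symmetric cycle in the hypercube graph on the vertex set `{0,1}^t`:
here `D^{k+t} = (1,…,1) - D^k` for `0 ≤ k ≤ t-1`. -/
structure IsSymCycle01 (t : ℕ) (D : ℕ → Vec t) : Prop where
  vertex : ∀ k, Is01Vertex (D k)
  periodic : ∀ k, D (k + 2 * t) = D k
  adj : ∀ k, hamming (D k) (D (k + 1)) = 1
  inj : ∀ k l, k < 2 * t → l < 2 * t → D k = D l → k = l
  symm : ∀ k, k ≤ t - 1 → D (k + t) = (fun _ => 1) - D k

open Classical in
/-- The vertex sequence `V(D) = (D^0, …, D^{2t-1})` of a cycle, as a finset. -/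
def VD (t : ℕ) (D : ℕ → Vec t) : Finset (Vec t) :=
  (Finset.range (2 * t)).image D

/-- `Q` is an inclusion-minimal subset of `V(D)` whose members sum to `T` (in `ℝ^t`). -/
def IsMinDecomp (t : ℕ) (D : ℕ → Vec t) (T : Vec t) (Q : Finset (Vec t)) : Prop :=
  Q ⊆ VD t D ∧ (∑ q ∈ Q, q) = T ∧
    ∀ Q' : Finset (Vec t), Q' ⊆ VD t D → (∑ q ∈ Q', q) = T → ¬Q' ⊂ Q

/-- The vertex `T_S ∈ {1,-1}^t` whose negative part is `S`. -/
def topeOf (t : ℕ) (S : Finset (Fin t)) : Vec t := fun i => if i ∈ S then -1 else 1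

/-- `x` is a coordinate vector of `T` w.r.t. `(D^0, …, D^{t-1})` with all
components in `{-1,0,1}`; by uniqueness this is the vector `x(T,D)`. -/
def IsXVec (t : ℕ) (D : ℕ → Vec t) (T : Vec t) (x : Fin t → ℝ) : Prop :=
  (∀ i, x i = -1 ∨ x i = 0 ∨ x i = 1) ∧ T = ∑ i : Fin t, x i • D (i : ℕ)

open Classical in
/-- The `{0,1}`-decomposition equation
`T = -(|Q|-1)/2 • (1,…,1) + ∑_{q ∈ Q, q ≠ 0} q`. -/
def Decomp01 (t : ℕ) (T : Vec t) (Q : Finset (Vec t)) : Prop :=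
  T = (-(((Q.card : ℝ) - 1) / 2)) • (fun _ => 1 : Vec t) +
    ∑ q ∈ Q.filter (fun q => q ≠ (0 : Vec t)), q

/-- `R^k` for `0 ≤ k ≤ t-1`: the all-ones vector with the first `k` coordinates negated. -/
def Rvec (t : ℕ) (k : ℕ) : Vec t := fun i => if (i : ℕ) < k then -1 else 1

/-- The distinguished symmetric cycle `R` in `H(t,2)`:
`R^0 = (1,…,1)`, `R^s = {}_{-[s]}R^0` for `1 ≤ s ≤ t-1`, and `R^{k+t} = -R^k`. -/
def Rcyc (t : ℕ) (k : ℕ) : Vec t :=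
  if k % (2 * t) < t then Rvec t (k % (2 * t)) else -(Rvec t (k % (2 * t) - t))

/-- `q(A) = ℓ`: an (automatically, the unique) inclusion-minimal subset of `V(R)`
summing to `T_A` has cardinality `ℓ`. -/
def qIs (t : ℕ) (A : Finset (Fin t)) (ℓ : ℕ) : Prop :=
  ∃ Q : Finset (Vec t), IsMinDecomp t (Rcyc t) (topeOf t A) Q ∧ Q.card = ℓ

/-- `c(m;n) = binom(n-1, m-1)`, the number of compositions of `n` into `m` positive
parts (zero whenever `m = 0` or `n ≤ 0`). -/
def comp (m : ℕ) (n : ℤ) : ℕ :=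
  if 1 ≤ m ∧ 1 ≤ n then ((n - 1).toNat).choose (m - 1) else 0

/-- The number of ternary Smirnov words (words with no two equal adjacent letters)
over the alphabet `(θ, α, β) = (0, 1, 2)` with Parikh vector `(k, i, j)`
(that is, `k` letters `θ`, `i` letters `α`, `j` letters `β`), starting with the
letter `s'` and ending with the letter `s''`. -/
def Tm (s' s'' : Fin 3) (k i j : ℕ) : ℕ :=
  Set.ncard { w : List (Fin 3) | List.Chain' (· ≠ ·) w ∧
    w.count 0 = k ∧ w.count 1 = i ∧ w.count 2 = j ∧
    w.head? = some s' ∧ w.getLast? = some s'' }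

/-- The number of Smirnov words over the alphabet `(θ, α, β, γ) = (0, 1, 2, 3)` with
Parikh vector `(k, i, j, h)`, starting with `s'` and ending with `s''`. -/
def Fr (s' s'' : Fin 4) (k i j h : ℕ) : ℕ :=
  Set.ncard { w : List (Fin 4) | List.Chain' (· ≠ ·) w ∧
    w.count 0 = k ∧ w.count 1 = i ∧ w.count 2 = j ∧ w.count 3 = h ∧
    w.head? = some s' ∧ w.getLast? = some s'' }

lemma Rcyc_lt {t k : ℕ} (h : k < t) : Rcyc t k = Rvec t k := by
  unfold Rcyc
  rw [Nat.mod_eq_of_lt (by omega), if_pos h]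

lemma Rcyc_ge {t k : ℕ} (h : k < t) : Rcyc t (t + k) = -Rvec t k := by
  unfold Rcyc
  rw [Nat.mod_eq_of_lt (by omega), if_neg (by omega)]
  congr 2; omega

lemma Rvec_inj {t k l : ℕ} (hk : k < t) (hl : l < t) (h : Rvec t k = Rvec t l) : k = l := by
  rcases lt_trichotomy k l with h1 | h1 | h1
  · have := congrFun h ⟨k, hk⟩
    simp [Rvec, h1] at this; norm_num at this
  · exact h1
  · have := congrFun h ⟨l, hl⟩
    simp [Rvec, h1] at this; norm_num at this

lemma Rvec_ne {t k l : ℕ} (hk : k < t) (hl : l < t) : Rvec t k ≠ - Rvec t l := by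
  intro h
  have := congrFun h ⟨t - 1, by omega⟩
  simp only [Rvec, Pi.neg_apply] at this
  rw [if_neg (by omega), if_neg (by omega)] at this
  norm_num at this

lemma Rcyc_inj {t : ℕ} : Set.InjOn (Rcyc t) (Finset.range (2 * t) : Finset ℕ) := by
  intro k hk l hl h
  simp only [Finset.coe_range, Set.mem_Iio] at hk hl
  rcases lt_or_ge k t with h1 | h1 <;> rcases lt_or_ge l t with h2 | h2
  · rw [Rcyc_lt h1, Rcyc_lt h2] at h
    exact Rvec_inj h1 h2 h
  · obtain ⟨b, rfl⟩ := Nat.exists_eq_add_of_le h2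
    rw [Rcyc_lt h1, Rcyc_ge (by omega)] at h
    exact absurd h (Rvec_ne h1 (by omega))
  · obtain ⟨b, rfl⟩ := Nat.exists_eq_add_of_le h1
    rw [Rcyc_lt h2, Rcyc_ge (by omega)] at h
    exact absurd h.symm (Rvec_ne h2 (by omega))
  · obtain ⟨b, rfl⟩ := Nat.exists_eq_add_of_le h1
    obtain ⟨c, rfl⟩ := Nat.exists_eq_add_of_le h2
    rw [Rcyc_ge (by omega), Rcyc_ge (by omega)] at h
    rw [Rvec_inj (by omega) (by omega) (neg_injective h)]

def yI (t : ℕ) (I : Finset ℕ) (k : ℕ) : ℝ :=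
  (if k ∈ I then 1 else 0) - (if t + k ∈ I then 1 else 0)

lemma sum_I {t : ℕ} (I : Finset ℕ) (hI : I ⊆ Finset.range (2 * t)) :
    ∑ k ∈ I, Rcyc t k = ∑ k : Fin t, yI t I k • Rvec t k := by
  have h1 : ∑ k ∈ I, Rcyc t k
      = ∑ k ∈ Finset.range (2 * t), (if k ∈ I then (1 : ℝ) else 0) • Rcyc t k := by
    rw [← Finset.sum_subset hI]
    · apply Finset.sum_congr rfl
      intro x hx; simp [hx]
    · intro x _ hx; simp [hx]
  rw [h1, two_mul, Finset.sum_range_add, ← Finset.sum_add_distrib, Finset.sum_range]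
  apply Finset.sum_congr rfl
  intro k _
  rw [Rcyc_lt k.2, Rcyc_ge k.2, yI, sub_smul, smul_neg, sub_eq_add_neg]

lemma card_I {t : ℕ} (I : Finset ℕ) (hI : I ⊆ Finset.range (2 * t)) :
    I.card = ∑ k : Fin t, ((if (k : ℕ) ∈ I then 1 else 0) + (if t + (k : ℕ) ∈ I then 1 else 0)) := by
  have h1 : I.card = ∑ k ∈ Finset.range (2 * t), (if k ∈ I then 1 else 0) := by
    rw [Finset.sum_ite_mem, Finset.inter_eq_right.2 hI]; simp
  rw [h1, two_mul, Finset.sum_range_add, ← Finset.sum_add_distrib, Finset.sum_range]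

lemma solve {n : ℕ} (y : Fin (n + 1) → ℝ) (T : Vec (n + 1)) :
    ∑ k : Fin (n + 1), y k • Rvec (n + 1) k = T ↔
    (∀ i : Fin n, T i.succ - T i.castSucc = 2 * y i.succ) ∧ T 0 + T (Fin.last n) = 2 * y 0 := by
  set S : Vec (n + 1) := ∑ k : Fin (n + 1), y k • Rvec (n + 1) k with hS
  have hSi : ∀ i, S i = ∑ k : Fin (n + 1), y k * Rvec (n + 1) k i := by
    intro i; simp [hS, Finset.sum_apply]
  have h1 : ∀ i : Fin n, S i.succ - S i.castSucc = 2 * y i.succ := by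
    intro i
    rw [hSi, hSi, ← Finset.sum_sub_distrib, Finset.sum_eq_single i.succ]
    · simp [Rvec]; ring
    · intro b _ hb
      have : (b : ℕ) ≠ i + 1 := fun h => hb (Fin.ext (by simpa using h))
      simp only [Rvec, Fin.val_succ, Fin.val_castSucc]
      by_cases h : (i : ℕ) < b
      · rw [if_pos h, if_pos (by omega)]; ring
      · rw [if_neg h, if_neg (by omega)]; ring
    · simp
  have h2 : S 0 + S (Fin.last n) = 2 * y 0 := by
    rw [hSi, hSi, ← Finset.sum_add_distrib, Finset.sum_eq_single 0]
    · simp [Rvec]; ring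
    · intro b _ hb
      have h0 : (0 : ℕ) < b := Nat.pos_of_ne_zero fun h => hb (Fin.ext (by simpa using h))
      have hb2 : ¬ n < (b : ℕ) := by have := b.2; omega
      simp [Rvec, h0, hb2]
    · simp
  constructor
  · rintro rfl; exact ⟨h1, h2⟩
  · rintro ⟨g1, g2⟩
    have hd : ∀ i, S i - T i = S 0 - T 0 := by
      intro i
      induction i using Fin.induction with
      | zero => rfl
      | succ i ih => have := h1 i; have := g1 i; linarith
    funext i
    have a1 := hd i
    have a2 := hd (Fin.last n)
    linarith

open Classical in
/-- cyclic sign change number -/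
def NA {n : ℕ} (P : Fin (n + 1) → Prop) : ℕ :=
  (if (P 0 ↔ P (Fin.last n)) then 1 else 0) +
    ∑ i : Fin n, if (P i.castSucc ↔ P i.succ) then 0 else 1

lemma card_of_min {n : ℕ} (A : Finset (Fin (n + 1))) (Q : Finset (Vec (n + 1)))
    (hQ : IsMinDecomp (n + 1) (Rcyc (n + 1)) (topeOf (n + 1) A) Q) :
    Q.card = NA (· ∈ A) := by
  classical
  obtain ⟨h1, h2, h3⟩ := hQ
  unfold VD at h1
  obtain ⟨I, hI, rfl⟩ := Finset.subset_image_iff.1 h1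
  have hIr : I ⊆ Finset.range (2 * (n + 1)) := by exact_mod_cast hI
  have inj : ∀ J ⊆ I, Set.InjOn (Rcyc (n + 1)) (J : Set ℕ) := fun J hJ =>
    Rcyc_inj.mono (by exact_mod_cast hJ.trans hIr)
  rw [Finset.sum_image (inj I subset_rfl)] at h2
  rw [Finset.card_image_of_injOn (inj I subset_rfl)]
  have anti : ∀ k, k < n + 1 → ¬ (k ∈ I ∧ (n + 1) + k ∈ I) := by
    rintro k hk ⟨ha, hb⟩
    have hb' : n + 1 + k ∈ I.erase k := Finset.mem_erase.2 ⟨by omega, hb⟩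
    have hJ : (I.erase k).erase (n + 1 + k) ⊆ I :=
      (Finset.erase_subset _ _).trans (Finset.erase_subset _ _)
    refine h3 (((I.erase k).erase (n + 1 + k)).image (Rcyc (n + 1))) ?_ ?_ ?_
    · exact (Finset.image_subset_image hJ).trans h1
    · rw [Finset.sum_image (inj _ hJ)]
      rw [← Finset.add_sum_erase _ _ ha, ← Finset.add_sum_erase _ _ hb', Rcyc_lt hk, Rcyc_ge hk] at h2
      simpa using h2
    · rw [Finset.ssubset_iff_subset_ne]
      refine ⟨Finset.image_subset_image hJ, fun h => ?_⟩
      have := congrArg Finset.card h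
      rw [Finset.card_image_of_injOn (inj _ hJ), Finset.card_image_of_injOn (inj I subset_rfl),
        Finset.card_erase_of_mem hb', Finset.card_erase_of_mem ha] at this
      have := Finset.card_pos.2 ⟨k, ha⟩
      omega
  rw [sum_I I hIr] at h2
  obtain ⟨g1, g2⟩ := (solve (fun k => yI (n + 1) I k) _).1 h2
  rw [card_I I hIr, Fin.sum_univ_succ, NA]
  congr 1
  · have a := anti 0 (by omega)
    simp only [topeOf, yI, Fin.val_zero] at g2 ⊢
    by_cases c1 : 0 ∈ I <;> by_cases c2 : n + 1 + 0 ∈ I <;> by_cases c3 : 0 ∈ A <;>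
      by_cases c4 : Fin.last n ∈ A <;> simp only [c1, c2, c3, c4, if_true, if_false] at g2 a ⊢ <;>
      first | (norm_num at g2; done) | simp_all
  · apply Finset.sum_congr rfl
    intro i _
    have a := anti (i.succ : Fin (n+1)) (i.succ.2)
    have g := g1 i
    simp only [topeOf, yI] at g ⊢
    by_cases c1 : ((i.succ : Fin (n+1)) : ℕ) ∈ I <;> by_cases c2 : n + 1 + ((i.succ : Fin (n+1)) : ℕ) ∈ I <;>
      by_cases c3 : i.castSucc ∈ A <;>
      by_cases c4 : i.succ ∈ A <;> simp only [c1, c2, c3, c4, if_true, if_false] at g a ⊢ <;>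
      first | (norm_num at g; done) | simp_all

lemma exists_sum {n : ℕ} (A : Finset (Fin (n + 1))) :
    ∃ Q : Finset (Vec (n + 1)), Q ⊆ VD (n + 1) (Rcyc (n + 1)) ∧ ∑ q ∈ Q, q = topeOf (n + 1) A := by
  classical
  set T := topeOf (n + 1) A with hT
  set y : Fin (n + 1) → ℝ := Fin.cases ((T 0 + T (Fin.last n)) / 2)
    (fun i => (T i.succ - T i.castSucc) / 2) with hy
  have hT1 : ∀ i, T i = 1 ∨ T i = -1 := by
    intro i; simp only [hT, topeOf]; split_ifs <;> simp
  have hyv : ∀ k, y k = 1 ∨ y k = 0 ∨ y k = -1 := by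
    intro k
    refine Fin.cases ?_ (fun i => ?_) k
    · simp only [hy, Fin.cases_zero]
      rcases hT1 0 with h | h <;> rcases hT1 (Fin.last n) with h' | h' <;> rw [h, h'] <;> norm_num
    · simp only [hy, Fin.cases_succ]
      rcases hT1 i.succ with h | h <;> rcases hT1 i.castSucc with h' | h' <;> rw [h, h'] <;> norm_num
  set I : Finset ℕ := ((univ.filter fun k => y k = 1).image fun k : Fin (n + 1) => (k : ℕ)) ∪
    ((univ.filter fun k => y k = -1).image fun k : Fin (n + 1) => n + 1 + (k : ℕ)) with hI
  have hIr : I ⊆ Finset.range (2 * (n + 1)) := by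
    intro x hx
    simp only [hI, Finset.mem_union, Finset.mem_image] at hx
    rw [Finset.mem_range]
    rcases hx with ⟨k, _, rfl⟩ | ⟨k, _, rfl⟩ <;> omega
  have m1 : ∀ k : Fin (n + 1), (k : ℕ) ∈ I ↔ y k = 1 := by
    intro k
    simp only [hI, Finset.mem_union, Finset.mem_image, Finset.mem_filter, Finset.mem_univ, true_and]
    constructor
    · rintro (⟨l, h, e⟩ | ⟨l, h, e⟩)
      · rw [← Fin.ext e]; exact h
      · omega
    · intro h; exact Or.inl ⟨k, h, rfl⟩
  have m2 : ∀ k : Fin (n + 1), n + 1 + (k : ℕ) ∈ I ↔ y k = -1 := by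
    intro k
    simp only [hI, Finset.mem_union, Finset.mem_image, Finset.mem_filter, Finset.mem_univ, true_and]
    constructor
    · rintro (⟨l, h, e⟩ | ⟨l, h, e⟩)
      · omega
      · have : l = k := Fin.ext (by omega)
        rw [← this]; exact h
    · intro h; exact Or.inr ⟨k, h, rfl⟩
  refine ⟨I.image (Rcyc (n + 1)), Finset.image_subset_image hIr, ?_⟩
  rw [Finset.sum_image (Rcyc_inj.mono (by exact_mod_cast hIr)), sum_I I hIr]
  have hyI : ∀ k : Fin (n + 1), yI (n + 1) I k = y k := by
    intro k
    simp only [yI, m1, m2]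
    rcases hyv k with h | h | h <;> rw [h] <;> norm_num
  simp only [hyI]
  rw [solve]
  constructor
  · intro i; simp only [hy, Fin.cases_succ]; ring
  · simp only [hy, Fin.cases_zero]; ring

lemma qIs_iff {n : ℕ} (A : Finset (Fin (n + 1))) (l : ℕ) :
    qIs (n + 1) A l ↔ NA (· ∈ A) = l := by
  constructor
  · rintro ⟨Q, hQ, rfl⟩; exact (card_of_min A Q hQ).symm
  · rintro rfl
    obtain ⟨Q, hQ⟩ := WellFounded.has_min (wellFounded_lt (α := Finset (Vec (n + 1))))
      {Q | Q ⊆ VD (n + 1) (Rcyc (n + 1)) ∧ ∑ q ∈ Q, q = topeOf (n + 1) A} (exists_sum A)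
    have hm : IsMinDecomp (n + 1) (Rcyc (n + 1)) (topeOf (n + 1) A) Q :=
      ⟨hQ.1.1, hQ.1.2, fun Q' h1 h2 h3 => hQ.2 Q' ⟨h1, h2⟩ h3⟩
    exact ⟨Q, hm, card_of_min A Q hm⟩

def cC : ℕ → ℕ → ℕ
  | 0, 0 => 1
  | 0, _ + 1 => 0
  | _ + 1, 0 => 0
  | m + 1, n + 1 => cC (m + 1) n + cC m n

lemma cC_choose (n : ℕ) : ∀ m, cC (m + 1) (n + 1) = n.choose m := by
  induction n with
  | zero => intro m; cases m <;> simp [cC]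
  | succ n ih =>
    intro m
    rw [cC, ih]
    cases m with
    | zero => simp [cC]
    | succ m => rw [ih, Nat.choose_succ_succ, add_comm]

def ds : List (Fin 4) → List (Fin 4)
  | [] => []
  | a :: l => if (ds l).head? = some a then ds l else a :: ds l

lemma ds_head (w : List (Fin 4)) : (ds w).head? = w.head? := by
  cases w with
  | nil => rfl
  | cons a l =>
    by_cases h : (ds l).head? = some a
    · simp [ds, h]
    · simp [ds, h]

lemma ds_last (w : List (Fin 4)) : (ds w).getLast? = w.getLast? := by
  induction w with
  | nil => rfl
  | cons a l ih =>
    have hh := ds_head l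
    by_cases h : (ds l).head? = some a
    · rw [ds, if_pos h, ih]
      cases l with
      | nil => simp [ds] at h
      | cons b l => simp [List.getLast?_cons]
    · rw [ds, if_neg h, List.getLast?_cons, List.getLast?_cons, ih]

lemma ds_chain (w : List (Fin 4)) : List.IsChain (· ≠ ·) (ds w) := by
  induction w with
  | nil => simp [ds]
  | cons a l ih =>
    by_cases h : (ds l).head? = some a
    · rw [ds, if_pos h]; exact ih
    · rw [ds, if_neg h, List.isChain_cons]
      refine ⟨?_, ih⟩
      intro y hy hay
      subst hay
      exact h hy

def NN (u : List (Fin 4)) (n : Fin 4 → ℕ) : Set (List (Fin 4)) :=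
  {w | ds w = u ∧ ∀ a, w.count a = n a}

lemma len_eq (w : List (Fin 4)) : w.length = ∑ a, w.count a := by
  induction w with
  | nil => simp
  | cons b l ih =>
    simp only [List.length_cons, ih, List.count_cons, Finset.sum_add_distrib]
    simp

lemma fin_count (n : Fin 4 → ℕ) : {w : List (Fin 4) | ∀ a, w.count a = n a}.Finite := by
  refine (List.finite_length_eq (Fin 4) (∑ a, n a)).subset ?_
  intro w hw
  simp only [Set.mem_ofPred_eq] at hw ⊢
  rw [len_eq]; simp [hw]

lemma NN_fin (u) (n : Fin 4 → ℕ) : (NN u n).Finite :=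
  (fin_count n).subset fun _ hw => hw.2

lemma NN_card (u : List (Fin 4)) (hu : List.IsChain (· ≠ ·) u) (k : ℕ) : ∀ n : Fin 4 → ℕ,
    ∑ a, n a = k → (NN u n).ncard = ∏ a, cC (u.count a) (n a) := by
  induction k generalizing u with
  | zero =>
    intro n hn
    have h0 : ∀ a, n a = 0 := by simpa using hn
    cases u with
    | nil =>
      have : NN [] n = {[]} := by
        ext w
        simp only [NN, Set.mem_ofPred_eq, Set.mem_singleton_iff, h0]
        constructor
        · rintro ⟨_, h⟩
          have := len_eq w
          simpa [h] using this
        · rintro rfl; simp [ds]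
      rw [this]; simp [h0, cC]
    | cons s u' =>
      have : NN (s :: u') n = ∅ := by
        ext w
        simp only [NN, Set.mem_ofPred_eq, Set.mem_empty_iff_false, iff_false, h0]
        rintro ⟨h1, h⟩
        have := len_eq w
        have hw : w = [] := by simpa [h] using this
        subst hw; simp [ds] at h1
      rw [this, Set.ncard_empty]
      symm
      apply Finset.prod_eq_zero (Finset.mem_univ s)
      simp [h0, cC]
  | succ k ih =>
    intro n hn
    cases u with
    | nil =>
      have : NN [] n = ∅ := by
        ext w
        simp only [NN, Set.mem_ofPred_eq, Set.mem_empty_iff_false, iff_false]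
        rintro ⟨h1, h⟩
        have := len_eq w
        have hh := ds_head w
        rw [h1] at hh
        cases w with
        | nil => simp only [← h] at hn; simp at hn
        | cons => simp at hh
      rw [this, Set.ncard_empty]
      symm
      have : ∃ a, n a ≠ 0 := by
        by_contra! h
        simp [h] at hn
      obtain ⟨a, ha⟩ := this
      apply Finset.prod_eq_zero (Finset.mem_univ a)
      obtain ⟨b, hb⟩ := Nat.exists_eq_succ_of_ne_zero ha
      simp [hb, cC]
    | cons s u' =>
      rcases Nat.eq_zero_or_pos (n s) with hs | hs
      · have : NN (s :: u') n = ∅ := by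
          ext w
          simp only [NN, Set.mem_ofPred_eq, Set.mem_empty_iff_false, iff_false]
          rintro ⟨h1, h⟩
          have h2 := h s
          have hh := ds_head w
          rw [h1] at hh
          cases w with
          | nil => simp at hh
          | cons b l =>
            simp at hh; subst hh; simp [hs] at h2
        rw [this, Set.ncard_empty]
        symm
        apply Finset.prod_eq_zero (Finset.mem_univ s)
        simp [hs, cC]
      · have hn' : ∃ n' : Fin 4 → ℕ, ∀ a, n a = n' a + if s = a then 1 else 0 := by
          refine ⟨fun a => n a - if s = a then 1 else 0, fun a => ?_⟩
          dsimp only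
          split_ifs with h
          · subst h; omega
          · omega
        obtain ⟨n', hn'⟩ := hn'
        have hk : ∑ a, n' a = k := by
          simp only [hn', Finset.sum_add_distrib] at hn
          simp at hn; exact hn
        rw [List.isChain_cons] at hu
        have hu1 : u'.head? ≠ some s := by
          intro h
          exact hu.1 s h rfl
        have himg : NN (s :: u') n = (List.cons s) '' (NN (s :: u') n' ∪ NN u' n') := by
          ext w
          simp only [NN, Set.mem_ofPred_eq, Set.mem_image, Set.mem_union]
          constructor
          · rintro ⟨h1, h⟩
            have hh := ds_head w
            rw [h1] at hh
            cases w with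
            | nil => simp at hh
            | cons b l =>
              simp at hh; subst hh
              refine ⟨l, ?_, rfl⟩
              have hc : ∀ a, l.count a = n' a := by
                intro a
                have := h a
                rw [hn', List.count_cons] at this
                simpa using this
              by_cases hd : (ds l).head? = some s
              · rw [ds, if_pos hd] at h1
                exact Or.inl ⟨h1, hc⟩
              · rw [ds, if_neg hd] at h1
                simp at h1
                exact Or.inr ⟨h1, hc⟩
          · rintro ⟨l, h, rfl⟩
            have hc : ∀ a, l.count a = n' a := by rcases h with h | h <;> exact h.2
            refine ⟨?_, fun a => by rw [hn', List.count_cons, hc]; simp⟩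
            rcases h with h | h
            · simp [ds, h.1]
            · simp [ds, h.1, hu1]
        rw [himg, Set.ncard_image_of_injective _ (List.cons_injective),
          Set.ncard_union_eq _ (NN_fin _ _) (NN_fin _ _),
          ih (s :: u') (List.isChain_cons.2 hu) n' hk, ih u' hu.2 n' hk]
        · rw [← Finset.mul_prod_erase _ _ (Finset.mem_univ s),
            ← Finset.mul_prod_erase _ _ (Finset.mem_univ s),
            ← Finset.mul_prod_erase univ (fun a => cC ((s :: u').count a) (n a)) (Finset.mem_univ s)]
          have e1 : ∏ x ∈ univ.erase s, cC ((s :: u').count x) (n' x)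
              = ∏ x ∈ univ.erase s, cC (u'.count x) (n' x) := by
            apply Finset.prod_congr rfl
            intro x hx
            rw [List.count_cons_of_ne (Finset.ne_of_mem_erase hx).symm]
          have e2 : ∏ x ∈ univ.erase s, cC ((s :: u').count x) (n x)
              = ∏ x ∈ univ.erase s, cC (u'.count x) (n' x) := by
            apply Finset.prod_congr rfl
            intro x hx
            rw [List.count_cons_of_ne (Finset.ne_of_mem_erase hx).symm, hn',
              if_neg (Finset.ne_of_mem_erase hx).symm, add_zero]
          rw [e1, e2, ← add_mul]
          congr 1
          simp [hn', cC]
        · rw [Set.disjoint_left]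
          rintro w ⟨h1, _⟩ ⟨h2, _⟩
          rw [h1] at h2
          have := congrArg List.length h2
          simp at this

def WW (s' s'' : Fin 4) (m n : Fin 4 → ℕ) : Set (List (Fin 4)) :=
  {w | (∀ a, w.count a = n a) ∧ (∀ a, (ds w).count a = m a) ∧
    w.head? = some s' ∧ w.getLast? = some s''}

lemma WW_card (s' s'' : Fin 4) (m n : Fin 4 → ℕ) :
    (WW s' s'' m n).ncard = Fr s' s'' (m 0) (m 1) (m 2) (m 3) * ∏ a, cC (m a) (n a) := by
  classical
  have fW : (WW s' s'' m n).Finite := (fin_count n).subset fun _ h => h.1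
  set U : Set (List (Fin 4)) := { w : List (Fin 4) | List.IsChain (· ≠ ·) w ∧
    w.count 0 = m 0 ∧ w.count 1 = m 1 ∧ w.count 2 = m 2 ∧ w.count 3 = m 3 ∧
    w.head? = some s' ∧ w.getLast? = some s'' } with hU
  have hFr : Fr s' s'' (m 0) (m 1) (m 2) (m 3) = U.ncard := rfl
  have fU : U.Finite := (fin_count m).subset fun w h => by
    obtain ⟨_, h0, h1, h2, h3, _⟩ := h
    intro a; fin_cases a <;> assumption
  rw [hFr, Set.ncard_eq_toFinset_card _ fW, Set.ncard_eq_toFinset_card _ fU]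
  rw [Finset.card_eq_sum_card_fiberwise (f := ds) (t := fU.toFinset)]
  · rw [Finset.sum_const_nat]
    intro u hu
    rw [Set.Finite.mem_toFinset] at hu
    obtain ⟨hc, h0, h1, h2, h3, hh, hl⟩ := hu
    have hm : ∀ a, u.count a = m a := by intro a; fin_cases a <;> assumption
    have := NN_card u hc _ n rfl
    simp only [hm] at this
    rw [← this, ← Set.ncard_coe_finset]
    congr 1
    ext w
    simp only [Finset.coe_filter, Set.Finite.mem_toFinset, Set.mem_ofPred_eq, NN, WW]
    constructor
    · rintro ⟨h, h'⟩; exact ⟨h', h.1⟩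
    · rintro ⟨rfl, h'⟩
      refine ⟨⟨h', hm, ?_, ?_⟩, rfl⟩
      · rw [← ds_head]; exact hh
      · rw [← ds_last]; exact hl
  · intro w hw
    simp only [Set.Finite.coe_toFinset] at hw ⊢
    obtain ⟨h1, h2, h3, h4⟩ := hw
    exact ⟨ds_chain w, h2 0, h2 1, h2 2, h2 3, by rw [ds_head]; exact h3, by rw [ds_last]; exact h4⟩

open Classical in
def chg {n : ℕ} (P : Fin (n + 1) → Prop) : ℕ :=
  ∑ i : Fin n, if (P i.castSucc ↔ P i.succ) then 0 else 1

open Classical in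
lemma chg_succ {n : ℕ} (P : Fin (n + 2) → Prop) :
    chg P = (if (P 0 ↔ P 1) then 0 else 1) + chg (fun i : Fin (n + 1) => P i.succ) := by
  unfold chg
  rw [Fin.sum_univ_succ]
  rfl

lemma runs (a : Fin 4) {n : ℕ} : ∀ f : Fin (n + 1) → Fin 4,
    chg (fun i => f i = a) +
      (if f 0 = a then 1 else 0) + (if f (Fin.last n) = a then 1 else 0)
      = 2 * (ds (List.ofFn f)).count a := by
  induction n with
  | zero =>
    intro f
    by_cases h : f 0 = a <;> simp [ds, h, chg]
  | succ n ih =>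
    intro f
    have hi := ih (fun i => f i.succ)
    rw [List.ofFn_succ, chg_succ]
    have hh : (ds (List.ofFn fun i : Fin (n + 1) => f i.succ)).head? = some (f 1) := by
      rw [ds_head, List.ofFn_succ]; simp
    simp only [Fin.succ_last, Fin.succ_zero_eq_one, Nat.succ_eq_add_one] at hi
    rw [ds, hh]
    simp only [Option.some.injEq]
    by_cases h01 : f 1 = f 0
    · rw [if_pos h01, ← hi]; simp [h01]
    · rw [if_neg h01, List.count_cons, mul_add, ← hi]
      by_cases c0 : f 0 = a
      · have c1 : f 1 ≠ a := fun h => h01 (h.trans c0.symm)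
        simp [c0, c1]; ring
      · by_cases c1 : f 1 = a <;> simp [c0, c1]; ring

lemma NA_not {n : ℕ} (P : Fin (n + 1) → Prop) : NA (fun i => ¬ P i) = NA P := by
  unfold NA
  congr 1
  · by_cases h : P 0 <;> by_cases h' : P (Fin.last n) <;> simp [h, h']
  · refine Finset.sum_congr rfl fun i _ => ?_
    by_cases h : P i.castSucc <;> by_cases h' : P i.succ <;> simp [h, h']

/-- letter word of a pair -/
def gP {n : ℕ} (p : Finset (Fin n) × Finset (Fin n)) (i : Fin n) : Fin 4 :=
  if i ∈ p.1 then (if i ∈ p.2 then 3 else 1) else (if i ∈ p.2 then 2 else 0)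

lemma gP0 {n : ℕ} (p : Finset (Fin n) × Finset (Fin n)) (i) : gP p i = 0 ↔ ¬ i ∈ p.1 ∪ p.2 := by
  unfold gP; split_ifs <;> simp_all
lemma gP1 {n : ℕ} (p : Finset (Fin n) × Finset (Fin n)) (i) : gP p i = 1 ↔ i ∈ p.1 \ p.2 := by
  unfold gP; split_ifs <;> simp_all
lemma gP2 {n : ℕ} (p : Finset (Fin n) × Finset (Fin n)) (i) : gP p i = 2 ↔ i ∈ p.2 \ p.1 := by
  unfold gP; split_ifs <;> simp_all
lemma gP3 {n : ℕ} (p : Finset (Fin n) × Finset (Fin n)) (i) : gP p i = 3 ↔ i ∈ p.1 ∩ p.2 := by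
  unfold gP; split_ifs <;> simp_all

lemma mem1 {n : ℕ} (p : Finset (Fin n) × Finset (Fin n)) (i) :
    i ∈ p.1 ↔ (gP p i = 1 ∨ gP p i = 3) := by
  unfold gP; split_ifs <;> simp_all
lemma mem2 {n : ℕ} (p : Finset (Fin n) × Finset (Fin n)) (i) :
    i ∈ p.2 ↔ (gP p i = 2 ∨ gP p i = 3) := by
  unfold gP; split_ifs <;> simp_all

lemma gP_inj {n : ℕ} : Function.Injective
    (fun p : Finset (Fin n) × Finset (Fin n) => List.ofFn (gP p)) := by
  intro p q h
  have h' : gP p = gP q := List.ofFn_injective h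
  ext i
  · rw [mem1, mem1, h']
  · rw [mem2, mem2, h']

lemma gP_surj {n : ℕ} (f : Fin n → Fin 4) : ∃ p, gP p = f := by
  refine ⟨(univ.filter fun i => f i = 1 ∨ f i = 3, univ.filter fun i => f i = 2 ∨ f i = 3), ?_⟩
  funext i
  simp only [gP, Finset.mem_filter, Finset.mem_univ, true_and]
  generalize f i = b
  revert b; decide

lemma count_ofFn' {n : ℕ} (a : Fin 4) : ∀ f : Fin n → Fin 4,
    (List.ofFn f).count a = (univ.filter fun i => f i = a).card := by
  induction n with
  | zero => intro f; simp
  | succ n ih =>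
    intro f
    rw [List.ofFn_succ, List.count_cons, ih, Finset.card_filter, Finset.card_filter,
      Fin.sum_univ_succ, add_comm]
    simp

lemma pairs_card {n : ℕ} (s' s'' : Fin 4) (m c : Fin 4 → ℕ) (hc : ∑ a, c a = n + 1)
    (S : Set (Finset (Fin (n + 1)) × Finset (Fin (n + 1))))
    (hS : ∀ p, p ∈ S ↔ (∀ a, (List.ofFn (gP p)).count a = c a) ∧
      (∀ a, (ds (List.ofFn (gP p))).count a = m a) ∧ gP p 0 = s' ∧ gP p (Fin.last n) = s'') :
    S.ncard = Fr s' s'' (m 0) (m 1) (m 2) (m 3) * ∏ a, cC (m a) (c a) := by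
  rw [← WW_card, ← Set.ncard_image_of_injective S gP_inj]
  have hh : ∀ f : Fin (n + 1) → Fin 4, (List.ofFn f).head? = some (f 0) := by
    intro f; rw [List.ofFn_succ]; rfl
  have hl : ∀ f : Fin (n + 1) → Fin 4, (List.ofFn f).getLast? = some (f (Fin.last n)) := by
    intro f; rw [List.ofFn_succ', List.concat_eq_append]; simp
  congr 1
  ext w
  simp only [Set.mem_image, hS, WW, Set.mem_ofPred_eq]
  constructor
  · rintro ⟨p, ⟨h1, h2, h3, h4⟩, rfl⟩
    exact ⟨h1, h2, by rw [hh, h3], by rw [hl, h4]⟩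
  · rintro ⟨h1, h2, h3, h4⟩
    have hlen : w.length = n + 1 := by rw [len_eq, ← hc]; simp [h1]
    obtain ⟨f, rfl⟩ : ∃ f : Fin (n + 1) → Fin 4, w = List.ofFn f := by
      refine ⟨fun i => w.get (i.cast hlen.symm), ?_⟩
      apply List.ext_get
      · simp [hlen]
      · intro i h1 h2
        rw [List.get_ofFn]
        rfl
    obtain ⟨p, rfl⟩ := gP_surj f
    rw [hh] at h3; rw [hl] at h4
    exact ⟨p, ⟨h1, h2, Option.some.inj h3, Option.some.inj h4⟩, rfl⟩

lemma comp_eq (m n : ℕ) (z : ℤ) (hm : 1 ≤ m) (hn : 1 ≤ n) (hz : z = n) : comp m z = cC m n := by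
  obtain ⟨m, rfl⟩ := Nat.exists_eq_add_of_le' hm
  obtain ⟨n, rfl⟩ := Nat.exists_eq_add_of_le' hn
  subst hz
  rw [cC_choose, comp, if_pos ⟨by omega, by push_cast; omega⟩]
  simp

lemma comp_zero (m : ℕ) (z : ℤ) (h : ¬ (1 ≤ m ∧ 1 ≤ z)) : comp m z = 0 := if_neg h

lemma runs_pos {a : Fin 4} {w : List (Fin 4)} (h : 1 ≤ w.count a) : 1 ≤ (ds w).count a := by
  induction w with
  | nil => simp at h
  | cons b l ih =>
    rw [ds]
    split_ifs with hd
    · rw [List.count_cons] at h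
      split_ifs at h with hb
      · simp at hb; subst hb
        rw [Nat.one_le_iff_ne_zero, ← Nat.pos_iff_ne_zero, List.count_pos_iff]
        exact List.mem_of_mem_head? hd
      · exact ih h
    · rw [List.count_cons] at h ⊢
      split_ifs at h ⊢ with hb
      · omega
      · have := ih h; omega

/-- relation between q-value and run count -/
def rel (l m : ℕ) (a s' s'' : Fin 4) : Prop :=
  l + (if s' = a then 1 else 0) + (if s'' = a then 1 else 0) =
    2 * m + (if (s' = a ↔ s'' = a) then 1 else 0)

lemma NA_rel {n : ℕ} (f : Fin (n + 1) → Fin 4) (a : Fin 4) :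
    rel (NA (fun i => f i = a)) ((ds (List.ofFn f)).count a) a (f 0) (f (Fin.last n)) := by
  have := runs a f
  have e : NA (fun i => f i = a) = (if (f 0 = a ↔ f (Fin.last n) = a) then 1 else 0) +
      chg (fun i => f i = a) := by
    unfold NA chg
    congr 1
    by_cases h : f 0 = a <;> by_cases h' : f (Fin.last n) = a <;> simp [h, h']
  unfold rel
  rw [← this, e]
  by_cases h : f 0 = a <;> by_cases h' : f (Fin.last n) = a <;> simp [h, h'] <;> ring

lemma rel_iff {l m l' m' : ℕ} {a s' s'' : Fin 4} (h : rel l m a s' s'') (h' : rel l' m' a s' s'') :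
    l' = l ↔ m' = m := by
  unfold rel at h h'
  omega

lemma generic {n : ℕ} (j' j'' j ℓ' ℓ'' ℓcap ℓ : ℕ) (s' s'' : Fin 4) (k0 k1 k2 k3 : ℕ)
    (r0 : rel ℓ k0 0 s' s'') (r1 : rel ℓ' k1 1 s' s'') (r2 : rel ℓ'' k2 2 s' s'')
    (r3 : rel ℓcap k3 3 s' s'')
    (S : Set (Finset (Fin (n + 1)) × Finset (Fin (n + 1)))) (E1 E2 : Finset (Fin (n + 1)))
    (E : Finset (Fin (n + 1)))
    (hE : ∀ p : Finset (Fin (n + 1)) × Finset (Fin (n + 1)),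
      (E ∩ p.1 = E1 ∧ E ∩ p.2 = E2) ↔ (gP p 0 = s' ∧ gP p (Fin.last n) = s''))
    (hS : S = { p | p.1.card = j' ∧ j' < n + 1 ∧ p.2.card = j'' ∧ j'' < n + 1 ∧ (p.1 ∩ p.2).card = j ∧ 0 < j ∧ j' < (p.1 ∪ p.2).card ∧ j'' < (p.1 ∪ p.2).card ∧ (p.1 ∪ p.2).card < n + 1 ∧ qIs (n + 1) (p.1 \ p.2) ℓ' ∧ qIs (n + 1) (p.2 \ p.1) ℓ'' ∧ qIs (n + 1) (p.1 ∩ p.2) ℓcap ∧ qIs (n + 1) (p.1 ∪ p.2) ℓ ∧ E ∩ p.1 = E1 ∧ E ∩ p.2 = E2 }) :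
    S.ncard = Fr s' s'' k0 k1 k2 k3 * comp k0 (((n + 1 : ℕ) : ℤ) - ((j' : ℤ) + (j'' : ℤ) - (j : ℤ))) * comp k1 ((j' : ℤ) - (j : ℤ)) * comp k2 ((j'' : ℤ) - (j : ℤ)) * comp k3 (j : ℤ) := by
  have hN : ∀ p : Finset (Fin (n + 1)) × Finset (Fin (n + 1)), gP p 0 = s' → gP p (Fin.last n) = s'' →
      (qIs (n + 1) (p.1 \ p.2) ℓ' ↔ (ds (List.ofFn (gP p))).count 1 = k1) ∧
      (qIs (n + 1) (p.2 \ p.1) ℓ'' ↔ (ds (List.ofFn (gP p))).count 2 = k2) ∧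
      (qIs (n + 1) (p.1 ∩ p.2) ℓcap ↔ (ds (List.ofFn (gP p))).count 3 = k3) ∧
      (qIs (n + 1) (p.1 ∪ p.2) ℓ ↔ (ds (List.ofFn (gP p))).count 0 = k0) := by
    intro p h0 h1
    have e0 : NA (· ∈ p.1 ∪ p.2) = NA (fun i => gP p i = 0) := by
      rw [← NA_not]; congr 1; funext i; rw [gP0]
    have e1 : NA (· ∈ p.1 \ p.2) = NA (fun i => gP p i = 1) := by
      congr 1; funext i; rw [gP1]
    have e2 : NA (· ∈ p.2 \ p.1) = NA (fun i => gP p i = 2) := by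
      congr 1; funext i; rw [gP2]
    have e3 : NA (· ∈ p.1 ∩ p.2) = NA (fun i => gP p i = 3) := by
      congr 1; funext i; rw [gP3]
    have key := NA_rel (gP p)
    rw [h0, h1] at key
    rw [qIs_iff, qIs_iff, qIs_iff, qIs_iff, e0, e1, e2, e3]
    exact ⟨rel_iff r1 (key 1), rel_iff r2 (key 2), rel_iff r3 (key 3), rel_iff r0 (key 0)⟩
  have hcount : ∀ p : Finset (Fin (n + 1)) × Finset (Fin (n + 1)),
      (List.ofFn (gP p)).count 0 + (p.1 ∪ p.2).card = n + 1 ∧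
      (List.ofFn (gP p)).count 1 + (p.1 ∩ p.2).card = p.1.card ∧
      (List.ofFn (gP p)).count 2 + (p.1 ∩ p.2).card = p.2.card ∧
      (List.ofFn (gP p)).count 3 = (p.1 ∩ p.2).card ∧
      (p.1 ∪ p.2).card + (p.1 ∩ p.2).card = p.1.card + p.2.card := by
    intro p
    simp only [count_ofFn', gP0, gP1, gP2, gP3]
    refine ⟨?_, ?_, ?_, ?_, Finset.card_union_add_card_inter _ _⟩
    · rw [Finset.filter_not, Finset.filter_mem_eq_inter, Finset.univ_inter,
        ← Finset.compl_eq_univ_sdiff, Finset.card_compl_add_card, Fintype.card_fin]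
    · rw [Finset.filter_mem_eq_inter, Finset.univ_inter, Finset.card_sdiff_add_card_inter]
    · rw [Finset.filter_mem_eq_inter, Finset.univ_inter, Finset.inter_comm p.1,
        Finset.card_sdiff_add_card_inter]
    · rw [Finset.filter_mem_eq_inter, Finset.univ_inter]
  by_cases good : (1 ≤ k0 ∧ 1 ≤ k1 ∧ 1 ≤ k2 ∧ 1 ≤ k3) ∧ (j < j' ∧ j < j'' ∧ 0 < j ∧ j' + j'' < n + 1 + j)
  · obtain ⟨⟨g0, g1, g2, g3⟩, a1, a2, a3, a4⟩ := good
    have := pairs_card (n := n) s' s'' ![k0, k1, k2, k3] ![n + 1 + j - (j' + j''), j' - j, j'' - j, j]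
      (by simp [Fin.sum_univ_four]; omega) S (by
        intro p
        simp only [Fin.forall_fin_succ, IsEmpty.forall_iff, and_true]
        simp only [Fin.succ_zero_eq_one, Fin.succ_one_eq_two, Fin.isValue, Matrix.cons_val_zero,
          Matrix.cons_val_one, Matrix.cons_val]
        have e3 : (Fin.succ (2 : Fin 3)) = 3 := rfl
        simp only [e3, Matrix.cons_val]
        obtain ⟨c0, c1, c2, c3, c4⟩ := hcount p
        rw [hS, Set.mem_ofPred_eq, hE]
        constructor
        · rintro ⟨b1, b2, b3, b4, b5, b6, b7, b8, b9, q1, q2, q3, q4, x1, x2⟩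
          obtain ⟨n1, n2, n3, n0⟩ := hN p x1 x2
          refine ⟨⟨by omega, by omega, by omega, by omega⟩, ⟨n0.1 q4, n1.1 q1, n2.1 q2, n3.1 q3⟩, x1, x2⟩
        · rintro ⟨⟨b0, b1, b2, b3⟩, ⟨q0, q1, q2, q3⟩, x1, x2⟩
          obtain ⟨n1, n2, n3, n0⟩ := hN p x1 x2
          exact ⟨by omega, by omega, by omega, by omega, by omega, by omega, by omega, by omega, by omega,
            n1.2 q1, n2.2 q2, n3.2 q3, n0.2 q0, x1, x2⟩)
    rw [this, Fin.prod_univ_four, comp_eq k0 (n + 1 + j - (j' + j'')) _ g0 (by omega) (by omega),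
      comp_eq k1 (j' - j) _ g1 (by omega) (by omega), comp_eq k2 (j'' - j) _ g2 (by omega) (by omega),
      comp_eq k3 j _ g3 (by omega) (by omega)]
    simp [mul_assoc]
  · have hemp : S = ∅ := by
      rw [hS, Set.eq_empty_iff_forall_notMem]
      intro p hp
      rw [Set.mem_ofPred_eq, hE] at hp
      obtain ⟨b1, b2, b3, b4, b5, b6, b7, b8, b9, q1, q2, q3, q4, x1, x2⟩ := hp
      obtain ⟨n1, n2, n3, n0⟩ := hN p x1 x2
      obtain ⟨c0, c1, c2, c3, c4⟩ := hcount p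
      apply good
      rw [← n0.1 q4, ← n1.1 q1, ← n2.1 q2, ← n3.1 q3]
      exact ⟨⟨runs_pos (by omega), runs_pos (by omega), runs_pos (by omega), runs_pos (by omega)⟩,
        by omega, by omega, by omega, by omega⟩
    rw [hemp, Set.ncard_empty]
    symm
    by_cases z0 : 1 ≤ k0 ∧ 1 ≤ ((n + 1 : ℕ) : ℤ) - ((j' : ℤ) + (j'' : ℤ) - (j : ℤ))
    · by_cases z1 : 1 ≤ k1 ∧ 1 ≤ (j' : ℤ) - (j : ℤ)
      · by_cases z2 : 1 ≤ k2 ∧ 1 ≤ (j'' : ℤ) - (j : ℤ)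
        · by_cases z3 : 1 ≤ k3 ∧ 1 ≤ (j : ℤ)
          · exfalso; apply good; push_cast at z0; omega
          · rw [comp_zero _ _ z3, mul_zero]
        · rw [comp_zero _ _ z2]; simp
      · rw [comp_zero _ _ z1]; simp
    · rw [comp_zero _ _ z0]; simp

lemma trace_iff {n : ℕ} (p : Finset (Fin (n + 1))) (hn : 2 ≤ n) :
    (({0, Fin.last n} : Finset (Fin (n + 1))) ∩ p = {0, Fin.last n} ↔ (0 ∈ p ∧ Fin.last n ∈ p)) ∧
    (({0, Fin.last n} : Finset (Fin (n + 1))) ∩ p = ∅ ↔ (0 ∉ p ∧ Fin.last n ∉ p)) ∧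
    (({0, Fin.last n} : Finset (Fin (n + 1))) ∩ p = {Fin.last n} ↔ (0 ∉ p ∧ Fin.last n ∈ p)) := by
  have hne : (0 : Fin (n + 1)) ≠ Fin.last n := by
    intro h; have := congrArg Fin.val h; simp at this; omega
  refine ⟨?_, ?_, ?_⟩
  · simp [Finset.inter_eq_left, Finset.insert_subset_iff]
  · rw [← Finset.disjoint_iff_inter_eq_empty]; simp
  · constructor
    · intro h
      have h0 := Finset.ext_iff.1 h 0
      have h1 := Finset.ext_iff.1 h (Fin.last n)
      simp only [Finset.mem_inter, Finset.mem_insert, Finset.mem_singleton, true_or, or_true,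
        true_and, hne, iff_false, iff_true] at h0 h1
      exact ⟨h0, h1⟩
    · rintro ⟨h0, h1⟩
      rw [Finset.insert_inter_of_notMem h0, Finset.singleton_inter_of_mem h1]

/-- cases (vi)–(x): counts of ordered two-member intersecting Sperner families
not covering `[t]`, refined by `q(A-B)`, `q(B-A)`, `q(A∩B)`, `q(A∪B)` and traces on `{1,t}`. -/
theorem stmt17 (t j' j'' j ℓ' ℓ'' ℓcap ℓ : ℕ) (ht : 3 ≤ t)
    (hodd' : Odd ℓ') (hle' : ℓ' ≤ t) (hodd'' : Odd ℓ'') (hle'' : ℓ'' ≤ t)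
    (hoddc : Odd ℓcap) (hlec : ℓcap ≤ t) (hoddl : Odd ℓ) (hlel : ℓ ≤ t)
    (S1 S2 S3 S4 S5 : Set (Finset (Fin t) × Finset (Fin t)))
    (hS1 : S1 = { p : Finset (Fin t) × Finset (Fin t) | p.1.card = j' ∧ j' < t ∧ p.2.card = j'' ∧ j'' < t ∧ (p.1 ∩ p.2).card = j ∧ 0 < j ∧ j' < (p.1 ∪ p.2).card ∧ j'' < (p.1 ∪ p.2).card ∧ (p.1 ∪ p.2).card < t ∧ qIs t (p.1 \ p.2) ℓ' ∧ qIs t (p.2 \ p.1) ℓ'' ∧ qIs t (p.1 ∩ p.2) ℓcap ∧ qIs t (p.1 ∪ p.2) ℓ ∧ ({⟨0, by omega⟩, ⟨t - 1, by omega⟩} : Finset (Fin t)) ∩ p.1 = ({⟨0, by omega⟩, ⟨t - 1, by omega⟩} : Finset (Fin t)) ∧ ({⟨0, by omega⟩, ⟨t - 1, by omega⟩} : Finset (Fin t)) ∩ p.2 = ∅ })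
    (hS2 : S2 = { p : Finset (Fin t) × Finset (Fin t) | p.1.card = j' ∧ j' < t ∧ p.2.card = j'' ∧ j'' < t ∧ (p.1 ∩ p.2).card = j ∧ 0 < j ∧ j' < (p.1 ∪ p.2).card ∧ j'' < (p.1 ∪ p.2).card ∧ (p.1 ∪ p.2).card < t ∧ qIs t (p.1 \ p.2) ℓ' ∧ qIs t (p.2 \ p.1) ℓ'' ∧ qIs t (p.1 ∩ p.2) ℓcap ∧ qIs t (p.1 ∪ p.2) ℓ ∧ ({⟨0, by omega⟩, ⟨t - 1, by omega⟩} : Finset (Fin t)) ∩ p.1 = ({⟨0, by omega⟩, ⟨t - 1, by omega⟩} : Finset (Fin t)) ∧ ({⟨0, by omega⟩, ⟨t - 1, by omega⟩} : Finset (Fin t)) ∩ p.2 = ({⟨t - 1, by omega⟩} : Finset (Fin t)) })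
    (hS3 : S3 = { p : Finset (Fin t) × Finset (Fin t) | p.1.card = j' ∧ j' < t ∧ p.2.card = j'' ∧ j'' < t ∧ (p.1 ∩ p.2).card = j ∧ 0 < j ∧ j' < (p.1 ∪ p.2).card ∧ j'' < (p.1 ∪ p.2).card ∧ (p.1 ∪ p.2).card < t ∧ qIs t (p.1 \ p.2) ℓ' ∧ qIs t (p.2 \ p.1) ℓ'' ∧ qIs t (p.1 ∩ p.2) ℓcap ∧ qIs t (p.1 ∪ p.2) ℓ ∧ ({⟨0, by omega⟩, ⟨t - 1, by omega⟩} : Finset (Fin t)) ∩ p.1 = ∅ ∧ ({⟨0, by omega⟩, ⟨t - 1, by omega⟩} : Finset (Fin t)) ∩ p.2 = ∅ })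
    (hS4 : S4 = { p : Finset (Fin t) × Finset (Fin t) | p.1.card = j' ∧ j' < t ∧ p.2.card = j'' ∧ j'' < t ∧ (p.1 ∩ p.2).card = j ∧ 0 < j ∧ j' < (p.1 ∪ p.2).card ∧ j'' < (p.1 ∪ p.2).card ∧ (p.1 ∪ p.2).card < t ∧ qIs t (p.1 \ p.2) ℓ' ∧ qIs t (p.2 \ p.1) ℓ'' ∧ qIs t (p.1 ∩ p.2) ℓcap ∧ qIs t (p.1 ∪ p.2) ℓ ∧ ({⟨0, by omega⟩, ⟨t - 1, by omega⟩} : Finset (Fin t)) ∩ p.1 = ∅ ∧ ({⟨0, by omega⟩, ⟨t - 1, by omega⟩} : Finset (Fin t)) ∩ p.2 = ({⟨t - 1, by omega⟩} : Finset (Fin t)) })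
    (hS5 : S5 = { p : Finset (Fin t) × Finset (Fin t) | p.1.card = j' ∧ j' < t ∧ p.2.card = j'' ∧ j'' < t ∧ (p.1 ∩ p.2).card = j ∧ 0 < j ∧ j' < (p.1 ∪ p.2).card ∧ j'' < (p.1 ∪ p.2).card ∧ (p.1 ∪ p.2).card < t ∧ qIs t (p.1 \ p.2) ℓ' ∧ qIs t (p.2 \ p.1) ℓ'' ∧ qIs t (p.1 ∩ p.2) ℓcap ∧ qIs t (p.1 ∪ p.2) ℓ ∧ ({⟨0, by omega⟩, ⟨t - 1, by omega⟩} : Finset (Fin t)) ∩ p.1 = ({⟨t - 1, by omega⟩} : Finset (Fin t)) ∧ ({⟨0, by omega⟩, ⟨t - 1, by omega⟩} : Finset (Fin t)) ∩ p.2 = ({⟨t - 1, by omega⟩} : Finset (Fin t)) })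
    : S1.ncard = Fr 1 1 ((ℓ - 1) / 2) ((ℓ' + 1) / 2) ((ℓ'' - 1) / 2) ((ℓcap - 1) / 2) * comp ((ℓ - 1) / 2) ((t : ℤ) - ((j' : ℤ) + (j'' : ℤ) - (j : ℤ))) * comp ((ℓ' + 1) / 2) ((j' : ℤ) - (j : ℤ)) * comp ((ℓ'' - 1) / 2) ((j'' : ℤ) - (j : ℤ)) * comp ((ℓcap - 1) / 2) ((j : ℤ)) ∧
      S2.ncard = Fr 1 3 ((ℓ - 1) / 2) ((ℓ' + 1) / 2) ((ℓ'' - 1) / 2) ((ℓcap + 1) / 2) * comp ((ℓ - 1) / 2) ((t : ℤ) - ((j' : ℤ) + (j'' : ℤ) - (j : ℤ))) * comp ((ℓ' + 1) / 2) ((j' : ℤ) - (j : ℤ)) * comp ((ℓ'' - 1) / 2) ((j'' : ℤ) - (j : ℤ)) * comp ((ℓcap + 1) / 2) ((j : ℤ)) ∧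
      S3.ncard = Fr 0 0 ((ℓ + 1) / 2) ((ℓ' - 1) / 2) ((ℓ'' - 1) / 2) ((ℓcap - 1) / 2) * comp ((ℓ + 1) / 2) ((t : ℤ) - ((j' : ℤ) + (j'' : ℤ) - (j : ℤ))) * comp ((ℓ' - 1) / 2) ((j' : ℤ) - (j : ℤ)) * comp ((ℓ'' - 1) / 2) ((j'' : ℤ) - (j : ℤ)) * comp ((ℓcap - 1) / 2) ((j : ℤ)) ∧
      S4.ncard = Fr 0 2 ((ℓ + 1) / 2) ((ℓ' - 1) / 2) ((ℓ'' + 1) / 2) ((ℓcap - 1) / 2) * comp ((ℓ + 1) / 2) ((t : ℤ) - ((j' : ℤ) + (j'' : ℤ) - (j : ℤ))) * comp ((ℓ' - 1) / 2) ((j' : ℤ) - (j : ℤ)) * comp ((ℓ'' + 1) / 2) ((j'' : ℤ) - (j : ℤ)) * comp ((ℓcap - 1) / 2) ((j : ℤ)) ∧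
      S5.ncard = Fr 0 3 ((ℓ + 1) / 2) ((ℓ' - 1) / 2) ((ℓ'' - 1) / 2) ((ℓcap + 1) / 2) * comp ((ℓ + 1) / 2) ((t : ℤ) - ((j' : ℤ) + (j'' : ℤ) - (j : ℤ))) * comp ((ℓ' - 1) / 2) ((j' : ℤ) - (j : ℤ)) * comp ((ℓ'' - 1) / 2) ((j'' : ℤ) - (j : ℤ)) * comp ((ℓcap + 1) / 2) ((j : ℤ)) := by
  obtain ⟨n, rfl⟩ : ∃ n, t = n + 1 := ⟨t - 1, by omega⟩
  have hn : 2 ≤ n := by omega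
  obtain ⟨a, rfl⟩ := hodd'
  obtain ⟨b, rfl⟩ := hodd''
  obtain ⟨c, rfl⟩ := hoddc
  obtain ⟨d, rfl⟩ := hoddl
  refine ⟨?_, ?_, ?_, ?_, ?_⟩
  · refine generic _ _ _ _ _ _ _ 1 1 _ _ _ _ ?_ ?_ ?_ ?_ S1 _ _ {0, Fin.last n} ?_ hS1
    · simp [rel] <;> omega
    · simp [rel] <;> omega
    · simp [rel] <;> omega
    · simp [rel] <;> omega
    · intro p
      refine (and_congr (trace_iff p.1 hn).1 (trace_iff p.2 hn).2.1).trans ?_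
      simp only [gP1, Finset.mem_sdiff]; tauto
  · refine generic _ _ _ _ _ _ _ 1 3 _ _ _ _ ?_ ?_ ?_ ?_ S2 _ _ {0, Fin.last n} ?_ hS2
    · simp [rel] <;> omega
    · simp [rel] <;> omega
    · simp [rel] <;> omega
    · simp [rel] <;> omega
    · intro p
      refine (and_congr (trace_iff p.1 hn).1 (trace_iff p.2 hn).2.2).trans ?_
      simp only [gP1, gP3, Finset.mem_sdiff, Finset.mem_inter]; tauto
  · refine generic _ _ _ _ _ _ _ 0 0 _ _ _ _ ?_ ?_ ?_ ?_ S3 _ _ {0, Fin.last n} ?_ hS3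
    · simp [rel] <;> omega
    · simp [rel] <;> omega
    · simp [rel] <;> omega
    · simp [rel] <;> omega
    · intro p
      refine (and_congr (trace_iff p.1 hn).2.1 (trace_iff p.2 hn).2.1).trans ?_
      simp only [gP0, Finset.mem_union]; tauto
  · refine generic _ _ _ _ _ _ _ 0 2 _ _ _ _ ?_ ?_ ?_ ?_ S4 _ _ {0, Fin.last n} ?_ hS4
    · simp [rel] <;> omega
    · simp [rel] <;> omega
    · simp [rel] <;> omega
    · simp [rel] <;> omega
    · intro p
      refine (and_congr (trace_iff p.1 hn).2.1 (trace_iff p.2 hn).2.2).trans ?_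
      simp only [gP0, gP2, Finset.mem_sdiff, Finset.mem_union]; tauto
  · refine generic _ _ _ _ _ _ _ 0 3 _ _ _ _ ?_ ?_ ?_ ?_ S5 _ _ {0, Fin.last n} ?_ hS5
    · simp [rel] <;> omega
    · simp [rel] <;> omega
    · simp [rel] <;> omega
    · simp [rel] <;> omega
    · intro p
      refine (and_congr (trace_iff p.1 hn).2.2 (trace_iff p.2 hn).2.2).trans ?_
      simp only [gP0, gP3, Finset.mem_inter, Finset.mem_union]; tauto
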